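/- Let k ≥ 1 and d > h ≥ 2 be positive integers and let G = (U,V,E) be a bipartite graph with d(u) ≤ d for all u ∈ U. Suppose that for every subset S of U, |Γ(S)| ≥ (h - 1 + (d - h + 1)/(k + 1 + (d - h - 1)·⌈k/h⌉))·|S|. Then G has an (h, hk)-matching. -/

import Mathlib

open scoped Classical

noncomputable section

variable {U V : Type*}

/-- The neighbourhood `Γ(S) ⊆ V` of a set `S` of left vertices of the bipartite
graph with edge set `E ⊆ U × V`. -/
def nbhd (E : Finset (U × V)) (S : Finset U) : Finset V :=
  (E.filter fun p => p.1 ∈ S).image Prod.snd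

/-- The neighbourhood `Γ(T) ⊆ U` of a set `T` of right vertices. -/
def nbhdR (E : Finset (U × V)) (T : Finset V) : Finset U :=
  (E.filter fun p => p.2 ∈ T).image Prod.fst

/-- The degree of a left vertex `u` in the bipartite graph with edge set `E`. -/
def degL (E : Finset (U × V)) (u : U) : ℕ := (E.filter fun p => p.1 = u).card

/-- The degree of a right vertex `v` in the bipartite graph with edge set `E`. -/
def degR (E : Finset (U × V)) (v : V) : ℕ := (E.filter fun p => p.2 = v).card

/-- The bipartite graph on the vertex set `U ⊕ V` determined by an edge set
`F ⊆ U × V`. -/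
def mkGraph (F : Finset (U × V)) : SimpleGraph (U ⊕ V) :=
  SimpleGraph.fromRel fun x y => ∃ p ∈ F, x = Sum.inl p.1 ∧ y = Sum.inr p.2

/-- The edges of `F` lying inside the connected component `c` of `mkGraph F`. -/
def componentEdges (F : Finset (U × V)) (c : (mkGraph F).ConnectedComponent) :
    Finset (U × V) :=
  F.filter fun p => (mkGraph F).connectedComponentMk (Sum.inl p.1) = c

/-- An `(s,t)`-matching in the bipartite graph `G = (U,V,E)`: a subset `F ⊆ E` such
that in `H = (U,V,F)` every connected component is a tree (i.e. `H` is acyclic) with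
at most `t` edges, and every vertex `u ∈ U` has degree exactly `s` in `H`. -/
def IsSTMatching (s t : ℕ) (E F : Finset (U × V)) : Prop :=
  F ⊆ E ∧ (mkGraph F).IsAcyclic ∧
    (∀ c : (mkGraph F).ConnectedComponent, (componentEdges F c).card ≤ t) ∧
    ∀ u : U, degL F u = s

/-!
The matching is built one left vertex at a time. Suppose that `F` serves a set of left vertices but
cannot be extended to `u₀`, even after rearrangement. Explore the components of `F` from `u₀`,
entering each new one through an edge of `E` from a left vertex already reached, and rearrange `F`
outside the explored part so that each new component is as small as possible on arrival.

If a component is entered from a left vertex `u` of another component (its parent), then exchanging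
an edge of `F` at `u` for the entering edge cannot shrink the parent. Hence the two components
together have more than `k` left vertices, the new one has at least `⌈k / h⌉`, and all children of
size at most `k / 2` of a given parent are entered from the same vertex `u`, so that there are at
most `d - h` of them. The components entered from `u₀` itself behave similarly: any `h` of them
have at least `k` left vertices in total, since otherwise a star at `u₀` could be attached to them.

Letting each small component borrow from its parent, the explored components are too large on
average, that is, too few for their total size. As a tree whose left vertices have degree `h` has
`(h - 1) * n + 1` right vertices for `n` left vertices, and every neighbour of a reached left vertex
lies in an explored component, the reached left vertices have too few neighbours.
-/

section Forest

open Finset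

variable {F F' H : Finset (U × V)} {u : U} {v : V} {X : Finset V}

lemma mem_nbhd_singleton : v ∈ nbhd F {u} ↔ (u, v) ∈ F := by
  simp [nbhd]

lemma card_nbhd_singleton (F : Finset (U × V)) (u : U) : #(nbhd F {u}) = degL F u := by
  simp only [nbhd, degL, mem_singleton]
  refine card_image_of_injOn fun p hp q hq hpq => Prod.ext ?_ hpq
  exact (mem_filter.1 hp).2.trans (mem_filter.1 hq).2.symm

lemma card_filter_fst_mem (F : Finset (U × V)) (S : Finset U) :
    #{p ∈ F | p.1 ∈ S} = ∑ u ∈ S, degL F u := by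
  rw [card_eq_sum_card_fiberwise (f := Prod.fst) (t := S) fun p hp => by simp_all]
  refine sum_congr rfl fun u hu => congrArg card ?_
  ext p
  simp only [mem_filter, and_assoc]
  exact and_congr_right fun _ => ⟨And.right, fun h => ⟨h ▸ hu, h⟩⟩

lemma mkGraph_adj {x y : U ⊕ V} : (mkGraph F).Adj x y ↔
    ∃ p ∈ F, x = .inl p.1 ∧ y = .inr p.2 ∨ x = .inr p.2 ∧ y = .inl p.1 := by
  simp only [mkGraph, SimpleGraph.fromRel_adj]
  constructor
  · rintro ⟨-, ⟨p, hp, h⟩ | ⟨p, hp, h⟩⟩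
    exacts [⟨p, hp, .inl h⟩, ⟨p, hp, .inr h.symm⟩]
  · rintro ⟨p, hp, ⟨rfl, rfl⟩ | ⟨rfl, rfl⟩⟩
    exacts [⟨Sum.inl_ne_inr, .inl ⟨p, hp, rfl, rfl⟩⟩, ⟨Sum.inr_ne_inl, .inr ⟨p, hp, rfl, rfl⟩⟩]

lemma mkGraph_mono (h : F ⊆ F') : mkGraph F ≤ mkGraph F' := fun _ _ hxy =>
  let ⟨p, hp, hxy⟩ := mkGraph_adj.1 hxy
  mkGraph_adj.2 ⟨p, h hp, hxy⟩

lemma reachable_of_mem (h : (u, v) ∈ F) : (mkGraph F).Reachable (.inl u) (.inr v) :=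
  (mkGraph_adj.2 ⟨_, h, .inl ⟨rfl, rfl⟩⟩).reachable

lemma mkGraph_reachable_induction {P : U ⊕ V → Prop} {x y : U ⊕ V}
    (hP : ∀ u v, (u, v) ∈ F → (P (.inl u) ↔ P (.inr v)))
    (hxy : (mkGraph F).Reachable x y) (hx : P x) : P y := by
  obtain ⟨walk⟩ := hxy
  induction walk with
  | nil => exact hx
  | cons hadj _ ih =>
    obtain ⟨p, hp, ⟨rfl, rfl⟩ | ⟨rfl, rfl⟩⟩ := mkGraph_adj.1 hadj
    exacts [ih ((hP _ _ hp).1 hx), ih ((hP _ _ hp).2 hx)]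

lemma exists_mem_of_reachable_inl (h : (mkGraph F).Reachable (.inr v) (.inl u)) :
    ∃ x, (u, x) ∈ F := by
  by_contra! hu
  refine mkGraph_reachable_induction (P := fun z => z ≠ .inl u) ?_ h Sum.inr_ne_inl rfl
  rintro a b hab
  have hau : a ≠ u := by rintro rfl; exact hu b hab
  simp [hau]

lemma exists_mem_of_reachable_inr {w : V} (h : (mkGraph F).Reachable (.inr v) (.inr w))
    (hne : w ≠ v) : ∃ x, (x, w) ∈ F := by
  by_contra! hw
  refine mkGraph_reachable_induction (P := fun z => z ≠ .inr w) ?_ h (by simpa using hne.symm) rfl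
  rintro a b hab
  have hbw : b ≠ w := by rintro rfl; exact hw a hab
  simp [hbw]

/-- The left vertices in the connected component of the right vertex `v`. -/
def leftComp (F : Finset (U × V)) (v : V) : Finset U :=
  {u ∈ F.image Prod.fst | (mkGraph F).Reachable (.inr v) (.inl u)}

/-- The right vertices in the connected component of the right vertex `v`; the explicit insertion
of `v` accounts for isolated vertices. -/
def rightComp (F : Finset (U × V)) (v : V) : Finset V :=
  insert v {w ∈ F.image Prod.snd | (mkGraph F).Reachable (.inr v) (.inr w)}

lemma mem_leftComp : u ∈ leftComp F v ↔ (mkGraph F).Reachable (.inr v) (.inl u) := by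
  simp only [leftComp, mem_filter, mem_image, Prod.exists, exists_and_right, exists_eq_right,
    and_iff_right_iff_imp]
  exact exists_mem_of_reachable_inl

lemma mem_rightComp {w : V} : w ∈ rightComp F v ↔ (mkGraph F).Reachable (.inr v) (.inr w) := by
  simp only [rightComp, mem_insert, mem_filter, mem_image, Prod.exists, exists_eq_right]
  refine ⟨?_, fun h => or_iff_not_imp_left.2 fun hne => ⟨exists_mem_of_reachable_inr h hne, h⟩⟩
  rintro (rfl | h)
  exacts [.rfl, h.2]

lemma leftComp_mono (h : F ⊆ F') (v : V) : leftComp F v ⊆ leftComp F' v := fun _ hu =>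
  mem_leftComp.2 ((mem_leftComp.1 hu).mono (mkGraph_mono h))

lemma leftComp_congr {w : V} (h : (mkGraph F).Reachable (.inr v) (.inr w)) :
    leftComp F v = leftComp F w := by
  ext u
  rw [mem_leftComp, mem_leftComp]
  exact ⟨h.symm.trans, h.trans⟩

lemma coe_disjSum_leftComp_rightComp (F : Finset (U × V)) (v : V) :
    (((leftComp F v).disjSum (rightComp F v) : Finset (U ⊕ V)) : Set (U ⊕ V)) =
      ((mkGraph F).connectedComponentMk (.inr v)).supp := by
  ext (u | w)
  · simp [mem_leftComp, SimpleGraph.reachable_comm]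
  · simp [mem_rightComp, SimpleGraph.reachable_comm]

/-- A connected graph has at most one more vertex than edges. -/
lemma card_rightComp_add_card_leftComp_le (F : Finset (U × V)) (v : V) :
    #(rightComp F v) + #(leftComp F v) ≤ ∑ u ∈ leftComp F v, degL F u + 1 := by
  set c := (mkGraph F).connectedComponentMk (.inr v)
  have hvert : Nat.card c = #(rightComp F v) + #(leftComp F v) := by
    rw [add_comm, ← card_disjSum, ← Set.ncard_coe_finset, coe_disjSum_leftComp_rightComp]
    rfl
  have hedge : Nat.card c.toSimpleGraph.edgeSet ≤ ∑ u ∈ leftComp F v, degL F u := by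
    rw [← card_filter_fst_mem]
    refine le_trans ?_ (card_image_le (f := fun p : U × V => s(Sum.inl p.1, Sum.inr p.2)))
    rw [← Set.ncard_coe_finset, Nat.card_coe_set_eq,
      ← Set.ncard_image_of_injective _ (Sym2.map.injective Subtype.val_injective)]
    refine Set.ncard_le_ncard ?_ (Finset.finite_toSet _)
    rintro _ ⟨e, he, rfl⟩
    induction e with
    | _ x y =>
      have hxy : (mkGraph F).Adj x y := he
      have hx : (mkGraph F).Reachable (.inr v) x := (SimpleGraph.ConnectedComponent.exact x.2).symm
      have hy : (mkGraph F).Reachable (.inr v) y := (SimpleGraph.ConnectedComponent.exact y.2).symm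
      obtain ⟨p, hp, ⟨h₁, h₂⟩ | ⟨h₁, h₂⟩⟩ := mkGraph_adj.1 hxy <;> rw [h₁] at hx <;> rw [h₂] at hy
      · exact mem_image.2 ⟨p, mem_filter.2 ⟨hp, mem_leftComp.2 hx⟩, by simp [h₁, h₂]⟩
      · exact mem_image.2 ⟨p, mem_filter.2 ⟨hp, mem_leftComp.2 hy⟩, by simp [h₁, h₂, Sym2.eq_swap]⟩
  have := c.connected_toSimpleGraph.card_vert_le_card_edgeSet_add_one
  omega

/-- The edges of `F` not incident to the left vertex `u`. -/
def deleteLeft (F : Finset (U × V)) (u : U) : Finset (U × V) := {p ∈ F | p.1 ≠ u}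

lemma mem_deleteLeft {p : U × V} : p ∈ deleteLeft F u ↔ p ∈ F ∧ p.1 ≠ u := mem_filter

lemma deleteLeft_subset (F : Finset (U × V)) (u : U) : deleteLeft F u ⊆ F := filter_subset _ _

lemma notMem_deleteLeft (F : Finset (U × V)) (u : U) (v : V) : (u, v) ∉ deleteLeft F u :=
  fun h => (mem_deleteLeft.1 h).2 rfl

lemma deleteLeft_eq_self (h : ∀ v, (u, v) ∉ F) : deleteLeft F u = F :=
  filter_true_of_mem fun p hp => by rintro rfl; exact h p.2 hp

lemma deleteLeft_union_star (F : Finset (U × V)) (u : U) :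
    deleteLeft F u ∪ {u} ×ˢ nbhd F {u} = F := by
  ext ⟨a, b⟩
  simp only [mem_union, mem_deleteLeft, mem_product, mem_singleton, mem_nbhd_singleton]
  constructor
  · rintro (h | ⟨rfl, h⟩)
    exacts [h.1, h]
  · intro h
    by_cases hau : a = u
    · subst hau; exact .inr ⟨rfl, h⟩
    · exact .inl ⟨h, hau⟩

lemma reachable_union_star_of_mem {x : V} (hx : x ∈ X) :
    (mkGraph (H ∪ {u} ×ˢ X)).Reachable (.inl u) (.inr x) :=
  reachable_of_mem (by simp [hx])

lemma reachable_union_star_iff (hu : ∀ x, (u, x) ∉ H)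
    (hv : ∀ x ∈ X, ¬ (mkGraph H).Reachable (.inr v) (.inr x)) {z : U ⊕ V} :
    (mkGraph (H ∪ {u} ×ˢ X)).Reachable (.inr v) z ↔ (mkGraph H).Reachable (.inr v) z := by
  refine ⟨fun h => mkGraph_reachable_induction ?_ h .rfl, .mono (mkGraph_mono subset_union_left)⟩
  intro a b hab
  simp only [mem_union, mem_product, mem_singleton] at hab
  rcases hab with hab | ⟨rfl, hb⟩
  · have hab := reachable_of_mem hab
    exact ⟨fun h => h.trans hab, fun h => h.trans hab.symm⟩
  · refine ⟨fun h => ?_, fun h => absurd h (hv b hb)⟩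
    obtain ⟨x, hx⟩ := exists_mem_of_reachable_inl h
    exact absurd hx (hu x)

lemma reachable_inl_union_star_iff (hu : ∀ x, (u, x) ∉ H) {z : U ⊕ V} :
    (mkGraph (H ∪ {u} ×ˢ X)).Reachable (.inl u) z ↔
      z = .inl u ∨ ∃ x ∈ X, (mkGraph H).Reachable (.inr x) z := by
  constructor
  · refine fun h => mkGraph_reachable_induction
      (P := fun z => z = .inl u ∨ ∃ x ∈ X, (mkGraph H).Reachable (.inr x) z) ?_ h (.inl rfl)
    intro a b hab
    simp only [mem_union, mem_product, mem_singleton] at hab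
    rcases hab with hab | ⟨rfl, hb⟩
    · have hau : a ≠ u := by rintro rfl; exact hu b hab
      have hab := reachable_of_mem hab
      simp only [Sum.inl.injEq, hau, reduceCtorEq, false_or]
      exact ⟨fun ⟨x, hx, h⟩ => ⟨x, hx, h.trans hab⟩, fun ⟨x, hx, h⟩ => ⟨x, hx, h.trans hab.symm⟩⟩
    · exact iff_of_true (.inl rfl) (.inr ⟨b, hb, .rfl⟩)
  · rintro (rfl | ⟨x, hx, h⟩)
    · exact .rfl
    · exact (reachable_union_star_of_mem hx).trans (h.mono (mkGraph_mono subset_union_left))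

/-- The vertices of `X` lie in pairwise distinct connected components. -/
def IsSeparated (F : Finset (U × V)) (X : Finset V) : Prop :=
  (X : Set V).Pairwise fun x y => ¬ (mkGraph F).Reachable (.inr x) (.inr y)

lemma IsSeparated.mono {Y : Finset V} (h : Y ⊆ X) (hX : IsSeparated F X) : IsSeparated F Y :=
  Set.Pairwise.mono (coe_subset.2 h) hX

lemma IsSeparated.insert (hX : IsSeparated F X)
    (hv : ∀ x ∈ X, ¬ (mkGraph F).Reachable (.inr v) (.inr x)) : IsSeparated F (insert v X) := by
  rw [IsSeparated, coe_insert]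
  exact Set.Pairwise.insert hX fun x hx _ => ⟨hv x hx, fun h => hv x hx h.symm⟩

lemma IsSeparated.card_biUnion_leftComp (hX : IsSeparated F X) :
    #(X.biUnion (leftComp F)) = ∑ x ∈ X, #(leftComp F x) :=
  card_biUnion fun _ hx _ hy hne => disjoint_left.2 fun _ ha hb =>
    hX hx hy hne ((mem_leftComp.1 ha).trans (mem_leftComp.1 hb).symm)

lemma isAcyclic_insert_iff (h : (u, v) ∉ F) : (mkGraph (insert (u, v) F)).IsAcyclic ↔
    (mkGraph F).IsAcyclic ∧ ¬ (mkGraph F).Reachable (.inl u) (.inr v) := by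
  have hsup : mkGraph (insert (u, v) F) = mkGraph F ⊔ .edge (.inl u) (.inr v) := by
    ext x y
    simp only [SimpleGraph.sup_adj, mkGraph_adj, SimpleGraph.edge_adj, exists_mem_insert]
    grind
  have hadj : ¬ (mkGraph F).Adj (.inl u) (.inr v) := by
    simpa [mkGraph_adj] using h
  rw [hsup, SimpleGraph.isAcyclic_sup_fromEdgeSet_iff]
  simp [hadj]

lemma isAcyclic_union_star_iff (hu : ∀ x, (u, x) ∉ H) :
    (mkGraph (H ∪ {u} ×ˢ X)).IsAcyclic ↔ (mkGraph H).IsAcyclic ∧ IsSeparated H X := by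
  induction X using Finset.induction_on with
  | empty => simp [IsSeparated]
  | insert a X ha ih =>
    have hstar : H ∪ {u} ×ˢ insert a X = insert (u, a) (H ∪ {u} ×ˢ X) := by
      ext ⟨b, c⟩
      simp only [mem_union, mem_product, mem_singleton, mem_insert, Prod.mk.injEq]
      tauto
    have hnew : (u, a) ∉ H ∪ {u} ×ˢ X := by simp [hu, ha]
    rw [hstar, isAcyclic_insert_iff hnew, ih, and_assoc, reachable_inl_union_star_iff hu]
    refine and_congr_right fun _ => ⟨fun ⟨hX, hr⟩ => ?_, fun h => ⟨?_, ?_⟩⟩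
    · refine hX.insert fun x hx hax => ?_
      exact hr (.inr ⟨x, hx, hax.symm⟩)
    · exact h.mono (subset_insert a X)
    · rintro (h' | ⟨x, hx, hxa⟩)
      · cases h'
      · exact h (mem_insert_of_mem hx) (mem_insert_self a X) (ne_of_mem_of_not_mem hx ha) hxa

lemma leftComp_union_star (hu : ∀ x, (u, x) ∉ H) {x : V} (hx : x ∈ X)
    (hvx : (mkGraph H).Reachable (.inr v) (.inr x)) :
    leftComp (H ∪ {u} ×ˢ X) v = insert u (X.biUnion (leftComp H)) := by
  have hvu : (mkGraph (H ∪ {u} ×ˢ X)).Reachable (.inr v) (.inl u) :=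
    (hvx.mono (mkGraph_mono subset_union_left)).trans (reachable_union_star_of_mem hx).symm
  ext a
  have : (mkGraph (H ∪ {u} ×ˢ X)).Reachable (.inr v) (.inl a) ↔
      (mkGraph (H ∪ {u} ×ˢ X)).Reachable (.inl u) (.inl a) := ⟨hvu.symm.trans, hvu.trans⟩
  rw [mem_leftComp, this, reachable_inl_union_star_iff hu]
  simp [mem_leftComp]

lemma card_leftComp_union_star (hu : ∀ x, (u, x) ∉ H) (hX : IsSeparated H X) {x : V} (hx : x ∈ X)
    (hvx : (mkGraph H).Reachable (.inr v) (.inr x)) :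
    #(leftComp (H ∪ {u} ×ˢ X) v) = ∑ x ∈ X, #(leftComp H x) + 1 := by
  have huX : u ∉ X.biUnion (leftComp H) := fun h => by
    obtain ⟨y, -, hy⟩ := mem_biUnion.1 h
    obtain ⟨z, hz⟩ := exists_mem_of_reachable_inl (mem_leftComp.1 hy)
    exact hu z hz
  rw [leftComp_union_star hu hx hvx, card_insert_of_notMem huX, hX.card_biUnion_leftComp]

end Forest

section Blocked

open Finset

variable {F : Finset (U × V)} {u u' : U} {v x : V} {z : U ⊕ V} {k s s' : ℕ}

lemma exists_reachable_deleteLeft (hr : (mkGraph F).Reachable (.inl u) z) (hz : z ≠ .inl u) :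
    ∃ x ∈ nbhd F {u}, (mkGraph (deleteLeft F u)).Reachable (.inr x) z := by
  rw [← deleteLeft_union_star F u, reachable_inl_union_star_iff (notMem_deleteLeft F u)] at hr
  exact hr.resolve_left hz

lemma exists_mem_nbhd_reachable_deleteLeft (hu : u ∈ leftComp F v) :
    ∃ x ∈ nbhd F {u}, (mkGraph (deleteLeft F u)).Reachable (.inr v) (.inr x) :=
  let ⟨x, hx, hxv⟩ := exists_reachable_deleteLeft (mem_leftComp.1 hu).symm Sum.inr_ne_inl
  ⟨x, hx, hxv.symm⟩

lemma reachable_deleteLeft_of_not_reachable (hne : u ≠ u') (hx : (u, x) ∈ F)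
    (hu' : ¬ (mkGraph (deleteLeft F u)).Reachable (.inr x) (.inl u'))
    (hz : (mkGraph (deleteLeft F u)).Reachable (.inr x) z) :
    (mkGraph (deleteLeft F u')).Reachable (.inl u) z := by
  have hux := reachable_of_mem (mem_deleteLeft.2 ⟨hx, hne⟩)
  refine (mkGraph_reachable_induction
    (P := fun z => (mkGraph (deleteLeft F u)).Reachable (.inr x) z ∧
      (mkGraph (deleteLeft F u')).Reachable (.inl u) z) ?_ hz ⟨.rfl, hux⟩).2
  intro a b hab
  have hab₁ := reachable_of_mem hab
  have hab₂ (ha : a ≠ u') := reachable_of_mem (mem_deleteLeft.2 ⟨(mem_deleteLeft.1 hab).1, ha⟩)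
  constructor
  · rintro ⟨h₁, h₂⟩
    exact ⟨h₁.trans hab₁, h₂.trans (hab₂ fun h => hu' (h ▸ h₁))⟩
  · rintro ⟨h₁, h₂⟩
    exact ⟨h₁.trans hab₁.symm, h₂.trans (hab₂ fun h => hu' (h ▸ h₁.trans hab₁.symm)).symm⟩

/-- The left vertices that the deletion of `u` separates from the right vertex `v`, including `u`
itself. -/
def cutOff (F : Finset (U × V)) (v : V) (u : U) : Finset U :=
  leftComp F v \ leftComp (deleteLeft F u) v

lemma cutOff_subset (F : Finset (U × V)) (v : V) (u : U) : cutOff F v u ⊆ leftComp F v :=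
  sdiff_subset

lemma mem_cutOff_self (hu : u ∈ leftComp F v) : u ∈ cutOff F v u :=
  mem_sdiff.2 ⟨hu, fun hmem =>
    let ⟨x, hx⟩ := exists_mem_of_reachable_inl (mem_leftComp.1 hmem)
    notMem_deleteLeft F u x hx⟩

lemma card_cutOff_add (F : Finset (U × V)) (v : V) (u : U) :
    #(cutOff F v u) + #(leftComp (deleteLeft F u) v) = #(leftComp F v) :=
  card_sdiff_add_card_eq_card (leftComp_mono (deleteLeft_subset F u) v)

lemma exists_branch_of_mem_cutOff {a : U} (hu : u ∈ leftComp F v) (ha : a ∈ cutOff F v u)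
    (hne : a ≠ u) : ∃ x ∈ nbhd F {u}, ¬ (mkGraph (deleteLeft F u)).Reachable (.inr v) (.inr x) ∧
      a ∈ leftComp (deleteLeft F u) x := by
  obtain ⟨ha, hna⟩ := mem_sdiff.1 ha
  have hua := (mem_leftComp.1 hu).symm.trans (mem_leftComp.1 ha)
  obtain ⟨x, hx, hxa⟩ := exists_reachable_deleteLeft hua (by simpa using hne)
  exact ⟨x, hx, fun hvx => hna (mem_leftComp.2 (hvx.trans hxa)), mem_leftComp.2 hxa⟩

/-- The obstruction to replacing a leaf of the star at `u` by a new right vertex whose component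
has `s` left vertices so that the component of `v` shrinks: dropping the leaf in the branch
towards `v` creates a component with more than `k` left vertices, and no other branch at `u` has
more than `s` left vertices. -/
structure IsBlocked (k : ℕ) (F : Finset (U × V)) (v : V) (u : U) (s : ℕ) : Prop where
  mem : u ∈ leftComp F v
  lt : k < #(cutOff F v u) + s
  card_branch_le : ∀ x ∈ nbhd F {u}, ¬ (mkGraph (deleteLeft F u)).Reachable (.inr v) (.inr x) →
    #(leftComp (deleteLeft F u) x) ≤ s

/-- One of the branches at `u` contains `v`, so fewer than `degL F u` of them are cut off. -/
lemma IsBlocked.le_mul (hb : IsBlocked k F v u s) : k ≤ degL F u * s := by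
  set B := {x ∈ nbhd F {u} | ¬ (mkGraph (deleteLeft F u)).Reachable (.inr v) (.inr x)}
  have hsub : cutOff F v u ⊆ insert u (B.biUnion (leftComp (deleteLeft F u))) := by
    intro a ha
    by_cases hne : a = u
    · exact hne ▸ mem_insert_self _ _
    · obtain ⟨x, hx, hvx, hxa⟩ := exists_branch_of_mem_cutOff hb.mem ha hne
      exact mem_insert_of_mem (mem_biUnion.2 ⟨x, mem_filter.2 ⟨hx, hvx⟩, hxa⟩)
  have hcard : #(B.biUnion (leftComp (deleteLeft F u))) ≤ #B * s :=
    card_biUnion_le_card_mul _ _ _ fun x hx =>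
      hb.card_branch_le x (mem_filter.1 hx).1 (mem_filter.1 hx).2
  have hBlt : #B < degL F u := by
    obtain ⟨x, hx, hvx⟩ := exists_mem_nbhd_reachable_deleteLeft hb.mem
    rw [← card_nbhd_singleton]
    exact card_lt_card (filter_ssubset.2 ⟨x, hx, not_not.2 hvx⟩)
  have hcut := (card_le_card hsub).trans (card_insert_le _ _)
  have hlt := hb.lt
  calc k ≤ (#B + 1) * s := by rw [add_one_mul]; omega
    _ ≤ degL F u * s := Nat.mul_le_mul_right s hBlt

lemma cutOff_subset_of_mem_cutOff (hu : u ∈ leftComp F v) (hu' : u' ∈ leftComp F v)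
    (hne : u' ≠ u) (hmem : u' ∈ cutOff F v u) :
    ∃ x ∈ nbhd F {u}, ¬ (mkGraph (deleteLeft F u)).Reachable (.inr v) (.inr x) ∧
      cutOff F v u' ⊆ leftComp (deleteLeft F u) x := by
  obtain ⟨x, hx, hvx, hxu'⟩ := exists_branch_of_mem_cutOff hu hmem hne
  refine ⟨x, hx, hvx, fun a ha => ?_⟩
  by_cases hau' : a = u'
  · exact hau' ▸ hxu'
  obtain ⟨y, hy, hvy, hya⟩ := exists_branch_of_mem_cutOff hu' ha hau'
  have huv : (mkGraph (deleteLeft F u')).Reachable (.inl u) (.inr v) := by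
    obtain ⟨x₀, hx₀, hvx₀⟩ := exists_mem_nbhd_reachable_deleteLeft hu
    refine reachable_deleteLeft_of_not_reachable hne.symm (mem_nbhd_singleton.1 hx₀) ?_ hvx₀.symm
    exact fun h => (mem_sdiff.1 hmem).2 (mem_leftComp.2 (hvx₀.trans h))
  have hyu : ¬ (mkGraph (deleteLeft F u')).Reachable (.inr y) (.inl u) := fun h =>
    hvy (h.trans huv).symm
  have hu'a := reachable_deleteLeft_of_not_reachable hne (mem_nbhd_singleton.1 hy) hyu
    (mem_leftComp.1 hya)
  exact mem_leftComp.2 ((mem_leftComp.1 hxu').trans hu'a)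

lemma disjoint_cutOff (hu : u ∈ leftComp F v) (hu' : u' ∈ leftComp F v) (h : u ∉ cutOff F v u')
    (h' : u' ∉ cutOff F v u) : Disjoint (cutOff F v u) (cutOff F v u') := by
  refine disjoint_left.2 fun a ha ha' => ?_
  have hau : a ≠ u := fun hau => h (hau ▸ ha')
  have hne : u ≠ u' := by
    rintro rfl
    exact h (mem_cutOff_self hu)
  obtain ⟨y, hy, hvy, hya⟩ := exists_branch_of_mem_cutOff hu ha hau
  have hvu' : (mkGraph (deleteLeft F u)).Reachable (.inr v) (.inl u') := by
    by_contra hvu'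
    exact h' (mem_sdiff.2 ⟨hu', fun hmem => hvu' (mem_leftComp.1 hmem)⟩)
  have hvu : (mkGraph (deleteLeft F u')).Reachable (.inr v) (.inl u) := by
    by_contra hvu
    exact h (mem_sdiff.2 ⟨hu, fun hmem => hvu (mem_leftComp.1 hmem)⟩)
  have hua := reachable_deleteLeft_of_not_reachable hne (mem_nbhd_singleton.1 hy)
    (fun hyu' => hvy (hvu'.trans hyu'.symm)) (mem_leftComp.1 hya)
  exact (mem_sdiff.1 ha').2 (mem_leftComp.2 (hvu.trans hua))

lemma IsBlocked.notMem_cutOff (hb : IsBlocked k F v u s) (hb' : IsBlocked k F v u' s')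
    (hne : u' ≠ u) (hs : s + s' ≤ k) : u' ∉ cutOff F v u := fun hmem => by
  obtain ⟨x, hx, hvx, hsub⟩ := cutOff_subset_of_mem_cutOff hb.mem hb'.mem hne hmem
  have := card_le_card hsub
  have := hb.card_branch_le x hx hvx
  have := hb'.lt
  omega

lemma IsBlocked.unique (hb : IsBlocked k F v u s) (hb' : IsBlocked k F v u' s')
    (hk : #(leftComp F v) ≤ k) (hs : s + s' ≤ k) : u = u' := by
  by_contra hne
  have hdisj := disjoint_cutOff hb.mem hb'.mem
    (hb'.notMem_cutOff hb hne (by omega)) (hb.notMem_cutOff hb' (Ne.symm hne) hs)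
  have hunion := card_le_card (union_subset (cutOff_subset F v u) (cutOff_subset F v u'))
  rw [card_union_of_disjoint hdisj] at hunion
  have := hb.lt
  have := hb'.lt
  omega

end Blocked

section Exchange

open Finset

variable {E F F' F'' : Finset (U × V)} {A : Finset U} {L X : Finset V} {u a : U} {v w x y : V}
  {h k : ℕ}

/-- Replaces the star of `F` at the left vertex `u` by the star with leaf set `X`. -/
def replaceStar (F : Finset (U × V)) (u : U) (X : Finset V) : Finset (U × V) :=
  deleteLeft F u ∪ {u} ×ˢ X

lemma mem_replaceStar : (a, y) ∈ replaceStar F u X ↔ (a, y) ∈ F ∧ a ≠ u ∨ a = u ∧ y ∈ X := by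
  simp [replaceStar, mem_deleteLeft, and_comm, eq_comm]

lemma degL_replaceStar_self (F : Finset (U × V)) (u : U) (X : Finset V) :
    degL (replaceStar F u X) u = #X := by
  rw [← card_nbhd_singleton]
  congr 1
  ext y
  simp [mem_nbhd_singleton, mem_replaceStar]

lemma degL_replaceStar_of_ne (hau : a ≠ u) : degL (replaceStar F u X) a = degL F a := by
  rw [← card_nbhd_singleton, ← card_nbhd_singleton]
  congr 1
  ext y
  simp [mem_nbhd_singleton, mem_replaceStar, hau]

/-- A candidate for an `(h, h * k)`-matching of `E` restricted to the left vertices in `A`. A tree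
in which every left vertex has degree `h` has at most `h * k` edges iff it has at most `k` left
vertices. -/
structure IsPartialMatching (E : Finset (U × V)) (h k : ℕ) (A : Finset U)
    (F : Finset (U × V)) : Prop where
  subset : F ⊆ E
  isAcyclic : (mkGraph F).IsAcyclic
  fst_mem : ∀ p ∈ F, p.1 ∈ A
  degL_eq : ∀ u ∈ A, degL F u = h
  card_leftComp_le : ∀ v, #(leftComp F v) ≤ k

lemma IsPartialMatching.mem_of_mem_leftComp (hF : IsPartialMatching E h k A F)
    (hu : u ∈ leftComp F v) : u ∈ A :=
  let ⟨_, hx⟩ := exists_mem_of_reachable_inl (mem_leftComp.1 hu)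
  hF.fst_mem _ hx

lemma isSeparated_nbhd (hF : (mkGraph F).IsAcyclic) (u : U) :
    IsSeparated (deleteLeft F u) (nbhd F {u}) := by
  rw [← deleteLeft_union_star F u, isAcyclic_union_star_iff (notMem_deleteLeft F u)] at hF
  exact hF.2

lemma IsPartialMatching.insert_replaceStar (hF : IsPartialMatching E h k A F)
    (hXE : X ⊆ nbhd E {u}) (hX : #X = h) (hsep : IsSeparated (deleteLeft F u) X)
    (hsum : ∑ x ∈ X, #(leftComp (deleteLeft F u) x) < k) :
    IsPartialMatching E h k (insert u A) (replaceStar F u X) where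
  subset := fun ⟨a, y⟩ hp => by
    obtain ⟨hp, -⟩ | ⟨rfl, hy⟩ := mem_replaceStar.1 hp
    exacts [hF.subset hp, mem_nbhd_singleton.1 (hXE hy)]
  isAcyclic := (isAcyclic_union_star_iff (notMem_deleteLeft F u)).2
    ⟨hF.isAcyclic.anti (mkGraph_mono (deleteLeft_subset F u)), hsep⟩
  fst_mem := fun ⟨a, y⟩ hp => by
    obtain ⟨hp, -⟩ | ⟨rfl, -⟩ := mem_replaceStar.1 hp
    exacts [mem_insert_of_mem (hF.fst_mem _ hp), mem_insert_self _ _]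
  degL_eq a ha := by
    by_cases hau : a = u
    · rw [hau, degL_replaceStar_self, hX]
    · rw [degL_replaceStar_of_ne hau, hF.degL_eq a (mem_of_mem_insert_of_ne ha hau)]
  card_leftComp_le v := by
    by_cases hv : ∃ x ∈ X, (mkGraph (deleteLeft F u)).Reachable (.inr v) (.inr x)
    · obtain ⟨x, hx, hvx⟩ := hv
      exact (card_leftComp_union_star (notMem_deleteLeft F u) hsep hx hvx).trans_le hsum
    · push Not at hv
      refine (card_le_card fun a ha => ?_).trans (hF.card_leftComp_le v)
      rw [mem_leftComp, replaceStar,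
        reachable_union_star_iff (notMem_deleteLeft F u) hv] at ha
      exact leftComp_mono (deleteLeft_subset F u) v (mem_leftComp.2 ha)

/-- The connected components of the vertices of `L` agree in the graphs of `F` and `F'`. -/
def SameComponents (L : Finset V) (F F' : Finset (U × V)) : Prop :=
  ∀ y ∈ L, ∀ z, (mkGraph F').Reachable (.inr y) z ↔ (mkGraph F).Reachable (.inr y) z

lemma SameComponents.trans (h₁ : SameComponents L F F') (h₂ : SameComponents L F' F'') :
    SameComponents L F F'' := fun y hy z => (h₂ y hy z).trans (h₁ y hy z)

lemma SameComponents.leftComp_eq (hs : SameComponents L F F') (hy : y ∈ L) :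
    leftComp F' y = leftComp F y := by
  ext u
  rw [mem_leftComp, mem_leftComp, hs y hy]

lemma SameComponents.rightComp_eq (hs : SameComponents L F F') (hy : y ∈ L) :
    rightComp F' y = rightComp F y := by
  ext w
  rw [mem_rightComp, mem_rightComp, hs y hy]

/-- Among the partial matchings that agree with `F` on the components of `L`, the component of `v`
is smallest in `F`. -/
def IsMinimalAt (E : Finset (U × V)) (h k : ℕ) (A : Finset U) (F : Finset (U × V)) (L : Finset V)
    (v : V) : Prop :=
  ∀ F', IsPartialMatching E h k A F' → SameComponents L F F' → #(leftComp F v) ≤ #(leftComp F' v)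

lemma reachable_deleteLeft_iff (hu : u ∉ leftComp F y) {z : U ⊕ V} :
    (mkGraph (deleteLeft F u)).Reachable (.inr y) z ↔ (mkGraph F).Reachable (.inr y) z := by
  conv_rhs => rw [← deleteLeft_union_star F u]
  refine (reachable_union_star_iff (notMem_deleteLeft F u) fun x hx hyx => hu ?_).symm
  exact mem_leftComp.2 ((hyx.mono (mkGraph_mono (deleteLeft_subset F u))).trans
    (reachable_of_mem (mem_nbhd_singleton.1 hx)).symm)

/-- Moves the edge of `F` from `u` to `x` so that it ends in `w`. -/
def exchange (F : Finset (U × V)) (u : U) (x w : V) : Finset (U × V) :=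
  replaceStar F u (insert w ((nbhd F {u}).erase x))

lemma notMem_nbhd_singleton_of_not_reachable (hw : u ∉ leftComp F w) : w ∉ nbhd F {u} := fun h =>
  hw (mem_leftComp.2 (reachable_of_mem (mem_nbhd_singleton.1 h)).symm)

lemma isSeparated_insert_erase (hsep : IsSeparated (deleteLeft F u) (nbhd F {u}))
    (hw : u ∉ leftComp F w) (x : V) :
    IsSeparated (deleteLeft F u) (insert w ((nbhd F {u}).erase x)) := by
  refine (hsep.mono (erase_subset _ _)).insert fun y hy hwy => hw (mem_leftComp.2 ?_)
  exact (hwy.mono (mkGraph_mono (deleteLeft_subset F u))).trans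
    (reachable_of_mem (mem_nbhd_singleton.1 (mem_of_mem_erase hy))).symm

lemma sum_card_leftComp_exchange (hF : (mkGraph F).IsAcyclic) (hu : u ∈ leftComp F v)
    (hw : u ∉ leftComp F w) (hx : x ∈ nbhd F {u}) :
    ∑ y ∈ insert w ((nbhd F {u}).erase x), #(leftComp (deleteLeft F u) y) + 1 +
        #(leftComp (deleteLeft F u) x) = #(leftComp F v) + #(leftComp F w) := by
  have hsep := isSeparated_nbhd hF u
  obtain ⟨x₀, hx₀, hvx₀⟩ := exists_mem_nbhd_reachable_deleteLeft hu
  have hv := card_leftComp_union_star (notMem_deleteLeft F u) hsep hx₀ hvx₀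
  have hw' : leftComp (deleteLeft F u) w = leftComp F w := by
    ext a
    rw [mem_leftComp, mem_leftComp, reachable_deleteLeft_iff hw]
  have hwX := notMem_nbhd_singleton_of_not_reachable hw
  rw [deleteLeft_union_star] at hv
  rw [sum_insert fun hmem => hwX (mem_of_mem_erase hmem), hw', hv, ← add_sum_erase _ _ hx]
  ring

lemma isPartialMatching_exchange (hF : IsPartialMatching E h k A F) (hu : u ∈ leftComp F v)
    (huw : (u, w) ∈ E) (hw : u ∉ leftComp F w) (hx : x ∈ nbhd F {u})
    (hle : #(leftComp F v) + #(leftComp F w) ≤ k + #(leftComp (deleteLeft F u) x)) :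
    IsPartialMatching E h k A (exchange F u x w) := by
  have huA := hF.mem_of_mem_leftComp hu
  have hwX := notMem_nbhd_singleton_of_not_reachable hw
  have hsum := sum_card_leftComp_exchange hF.isAcyclic hu hw hx
  rw [← insert_eq_of_mem huA]
  refine hF.insert_replaceStar (insert_subset (mem_nbhd_singleton.2 huw) fun y hy => ?_) ?_
    (isSeparated_insert_erase (isSeparated_nbhd hF.isAcyclic u) hw x) (by omega)
  · exact mem_nbhd_singleton.2 (hF.subset (mem_nbhd_singleton.1 (mem_of_mem_erase hy)))
  · rw [card_insert_of_notMem fun hmem => hwX (mem_of_mem_erase hmem), card_erase_add_one hx,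
      card_nbhd_singleton, hF.degL_eq u huA]

lemma sameComponents_exchange (hu : ∀ y ∈ L, u ∉ leftComp F y)
    (hw : ∀ y ∈ L, ¬ (mkGraph F).Reachable (.inr y) (.inr w)) (x : V) :
    SameComponents L F (exchange F u x w) := fun y hy z => by
  refine (reachable_union_star_iff (notMem_deleteLeft F u) fun b hb hyb => ?_).trans
    (reachable_deleteLeft_iff (hu y hy))
  rw [reachable_deleteLeft_iff (hu y hy)] at hyb
  obtain rfl | hb := mem_insert.1 hb
  · exact hw y hy hyb
  · exact hu y hy (mem_leftComp.2
      (hyb.trans (reachable_of_mem (mem_nbhd_singleton.1 (mem_of_mem_erase hb))).symm))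

lemma IsPartialMatching.isBlocked (hF : IsPartialMatching E h k A F)
    (hmin : IsMinimalAt E h k A F L v) (hu : u ∈ leftComp F v) (huw : (u, w) ∈ E)
    (hw : u ∉ leftComp F w) (hLu : ∀ y ∈ L, u ∉ leftComp F y)
    (hLw : ∀ y ∈ L, ¬ (mkGraph F).Reachable (.inr y) (.inr w)) :
    IsBlocked k F v u #(leftComp F w) := by
  have hsep := isSeparated_nbhd hF.isAcyclic u
  obtain ⟨x₀, hx₀, hvx₀⟩ := exists_mem_nbhd_reachable_deleteLeft hu
  have hcut := card_cutOff_add F v u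
  refine ⟨hu, ?_, fun x hx hvx => ?_⟩ <;> by_contra! hlt
  · have hx₀v := congrArg card (leftComp_congr hvx₀)
    have hle := hmin _ (isPartialMatching_exchange hF hu huw hw hx₀ (by omega))
      (sameComponents_exchange hLu hLw x₀)
    have hcomp : leftComp (exchange F u x₀ w) v = leftComp (deleteLeft F u) v := by
      ext a
      rw [mem_leftComp, mem_leftComp]
      refine reachable_union_star_iff (notMem_deleteLeft F u) fun b hb hvb => ?_
      obtain rfl | hb := mem_insert.1 hb
      · exact hw (mem_leftComp.2 ((hvb.symm.mono (mkGraph_mono (deleteLeft_subset F u))).trans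
          (mem_leftComp.1 hu)))
      · exact hsep hx₀ (mem_of_mem_erase hb) (ne_of_mem_erase hb).symm (hvx₀.symm.trans hvb)
    have hpos : 0 < #(cutOff F v u) := card_pos.2 ⟨u, mem_cutOff_self hu⟩
    rw [hcomp] at hle
    omega
  · have hvk := hF.card_leftComp_le v
    have hle := hmin _ (isPartialMatching_exchange hF hu huw hw hx (by omega))
      (sameComponents_exchange hLu hLw x)
    have hx₀' : x₀ ∈ insert w ((nbhd F {u}).erase x) :=
      mem_insert_of_mem (mem_erase.2 ⟨fun h => hvx (h ▸ hvx₀), hx₀⟩)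
    have hcomp := card_leftComp_union_star (notMem_deleteLeft F u)
      (isSeparated_insert_erase hsep hw x) hx₀' hvx₀
    have hsum := sum_card_leftComp_exchange hF.isAcyclic hu hw hx
    rw [exchange, replaceStar] at hle
    omega

end Exchange

section Exploration

open Finset

variable {E F F' : Finset (U × V)} {A : Finset U} {L : Finset V} {u₀ : U} {v : V} {h k : ℕ}

/-- The left vertices reached once the components of the right vertices in `L` are explored from
`u₀`. -/
def reachedLeft (F : Finset (U × V)) (u₀ : U) (L : Finset V) : Finset U :=
  insert u₀ (L.biUnion (leftComp F))

/-- The right vertices in the explored components. -/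
def reachedRight (F : Finset (U × V)) (L : Finset V) : Finset V := L.biUnion (rightComp F)

lemma mem_reachedRight : v ∈ reachedRight F L ↔
    ∃ y ∈ L, (mkGraph F).Reachable (.inr y) (.inr v) := by
  simp only [reachedRight, mem_biUnion, mem_rightComp]

lemma subset_reachedRight (F : Finset (U × V)) (L : Finset V) : L ⊆ reachedRight F L := fun v hv =>
  mem_reachedRight.2 ⟨v, hv, .rfl⟩

lemma SameComponents.reachedLeft_eq (hs : SameComponents L F F') (u₀ : U) :
    reachedLeft F' u₀ L = reachedLeft F u₀ L :=
  congrArg (insert u₀) (biUnion_congr rfl fun _ => hs.leftComp_eq)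

lemma SameComponents.reachedRight_eq (hs : SameComponents L F F') :
    reachedRight F' L = reachedRight F L :=
  biUnion_congr rfl fun _ => hs.rightComp_eq

/-- `L` consists of entry points of components discovered one at a time from `u₀`: each new entry
point is an `E`-neighbour of a left vertex reached before, and `F` has the smallest possible
component there given the earlier ones. -/
inductive IsExploration (E : Finset (U × V)) (h k : ℕ) (A : Finset U) (u₀ : U)
    (F : Finset (U × V)) : Finset V → Prop
  | empty : IsExploration E h k A u₀ F ∅
  | cons {L : Finset V} {v : V} : IsExploration E h k A u₀ F L →
      v ∈ nbhd E (reachedLeft F u₀ L) → v ∉ reachedRight F L → IsMinimalAt E h k A F L v →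
      IsExploration E h k A u₀ F (insert v L)

lemma SameComponents.mono {L' : Finset V} (h : L ⊆ L') (hs : SameComponents L' F F') :
    SameComponents L F F' := fun y hy => hs y (h hy)

lemma IsMinimalAt.congr (hmin : IsMinimalAt E h k A F L v) (hs : SameComponents (insert v L) F F') :
    IsMinimalAt E h k A F' L v := fun F'' hF'' hs' => by
  rw [hs.leftComp_eq (mem_insert_self v L)]
  exact hmin F'' hF'' ((hs.mono (subset_insert v L)).trans hs')

lemma IsExploration.congr (hL : IsExploration E h k A u₀ F L) (hs : SameComponents L F F') :
    IsExploration E h k A u₀ F' L := by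
  induction hL with
  | empty => exact .empty
  | cons _ hv hvL hmin ih =>
    have hs' := hs.mono (subset_insert _ _)
    exact .cons (ih hs') (by rwa [hs'.reachedLeft_eq]) (by rwa [hs'.reachedRight_eq])
      (hmin.congr hs)

lemma exists_isMinimalAt (hF : IsPartialMatching E h k A F) (L : Finset V) (v : V) :
    ∃ F', IsPartialMatching E h k A F' ∧ SameComponents L F F' ∧ IsMinimalAt E h k A F' L v := by
  obtain ⟨F', ⟨hF', hs⟩, hmin⟩ := exists_minimalFor_of_wellFoundedLT
    (fun F' => IsPartialMatching E h k A F' ∧ SameComponents L F F')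
    (fun F' => #(leftComp F' v)) ⟨F, hF, fun _ _ _ => .rfl⟩
  exact ⟨F', hF', hs, fun F'' hF'' hs' =>
    (le_total _ _).elim id (hmin ⟨hF'', hs.trans hs'⟩)⟩

lemma IsExploration.exists_insert (hL : IsExploration E h k A u₀ F L)
    (hF : IsPartialMatching E h k A F) (hv : v ∈ nbhd E (reachedLeft F u₀ L))
    (hvL : v ∉ reachedRight F L) :
    ∃ F', IsPartialMatching E h k A F' ∧ IsExploration E h k A u₀ F' (insert v L) := by
  obtain ⟨F', hF', hs, hmin⟩ := exists_isMinimalAt hF L v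
  exact ⟨F', hF', .cons (hL.congr hs) (by rwa [hs.reachedLeft_eq])
    (by rwa [hs.reachedRight_eq]) hmin⟩

lemma IsExploration.exists_nbhd_subset {F : Finset (U × V)} {L : Finset V}
    (hL : IsExploration E h k A u₀ F L) (hF : IsPartialMatching E h k A F) :
    ∃ F' L', IsPartialMatching E h k A F' ∧ IsExploration E h k A u₀ F' L' ∧
      nbhd E (reachedLeft F' u₀ L') ⊆ reachedRight F' L' := by
  by_cases hsub : nbhd E (reachedLeft F u₀ L) ⊆ reachedRight F L
  · exact ⟨F, L, hF, hL, hsub⟩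
  · obtain ⟨v, hv, hvL⟩ := not_subset.1 hsub
    obtain ⟨F', hF', hL'⟩ := hL.exists_insert hF hv hvL
    exact hL'.exists_nbhd_subset hF'
termination_by #(E.image Prod.snd \ L)
decreasing_by
  have hvE : v ∈ E.image Prod.snd := image_subset_image (filter_subset _ _) hv
  have hvL' : v ∉ L := fun h => hvL (subset_reachedRight F L h)
  rw [sdiff_insert]
  exact card_erase_lt_of_mem (mem_sdiff.2 ⟨hvE, hvL'⟩)

lemma IsExploration.isSeparated (hL : IsExploration E h k A u₀ F L) : IsSeparated F L := by
  induction hL with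
  | empty => simp [IsSeparated]
  | cons _ _ hvL _ ih =>
    exact ih.insert fun y hy hvy => hvL (mem_reachedRight.2 ⟨y, hy, hvy.symm⟩)

lemma IsExploration.exists_subset_isMinimalAt (hL : IsExploration E h k A u₀ F L) (hv : v ∈ L) :
    ∃ L' ⊆ L, v ∉ L' ∧ IsMinimalAt E h k A F L' v := by
  induction hL with
  | empty => simp at hv
  | @cons L w _ _ hwL hmin ih =>
    obtain rfl | hv := mem_insert.1 hv
    · exact ⟨L, subset_insert _ L, fun h => hwL (subset_reachedRight F L h), hmin⟩
    · obtain ⟨L', hL', h⟩ := ih hv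
      exact ⟨L', hL'.trans (subset_insert _ L), h⟩

lemma IsExploration.exists_parent (hL : IsExploration E h k A u₀ F L) (hv : v ∈ L) :
    (u₀, v) ∈ E ∨ ∃ w ∈ L, (∃ u ∈ leftComp F w, (u, v) ∈ E) ∧
      ∃ L' ⊆ L, w ∉ L' ∧ v ∉ L' ∧ IsMinimalAt E h k A F L' w ∧ w ≠ v := by
  induction hL with
  | empty => simp at hv
  | @cons L w hL hw hwL _ ih =>
    obtain rfl | hv := mem_insert.1 hv
    · simp only [nbhd, reachedLeft, mem_image, mem_filter, mem_insert, mem_biUnion] at hw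
      obtain ⟨⟨a, _⟩, ⟨hE, rfl | ⟨y, hy, hay⟩⟩, rfl⟩ := hw
      · exact .inl hE
      · have hvL := fun h => hwL (subset_reachedRight F L h)
        obtain ⟨L', hL', hyL', hmin⟩ := hL.exists_subset_isMinimalAt hy
        exact .inr ⟨y, mem_insert_of_mem hy, ⟨a, hay, hE⟩, L', hL'.trans (subset_insert _ L), hyL',
          fun h => hvL (hL' h), hmin, ne_of_mem_of_not_mem hy hvL⟩
    · refine (ih hv).imp_right fun ⟨y, hy, huv, L', hL', h⟩ => ?_
      exact ⟨y, mem_insert_of_mem hy, huv, L', hL'.trans (subset_insert _ L), h⟩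

lemma IsExploration.exists_isBlocked (hL : IsExploration E h k A u₀ F L)
    (hF : IsPartialMatching E h k A F) (hv : v ∈ L) (hv₀ : (u₀, v) ∉ E) :
    ∃ w ∈ L, ∃ u, (u, v) ∈ E ∧ (u, v) ∉ F ∧ IsBlocked k F w u #(leftComp F v) := by
  obtain ⟨w, hw, ⟨u, hu, huv⟩, L', hL', hwL', hvL', hmin, hne⟩ :=
    (hL.exists_parent hv).resolve_left hv₀
  have hu' {y : V} (hy : y ∈ L) (hyw : y ≠ w) : u ∉ leftComp F y := fun huy =>
    hL.isSeparated hy hw hyw ((mem_leftComp.1 huy).trans (mem_leftComp.1 hu).symm)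
  refine ⟨w, hw, u, huv, fun h => hu' hv hne.symm (mem_leftComp.2 (reachable_of_mem h).symm),
    hF.isBlocked hmin hu huv (hu' hv hne.symm) (fun y hy => hu' (hL' hy) ?_) fun y hy => ?_⟩
  · exact ne_of_mem_of_not_mem hy hwL'
  · exact hL.isSeparated (hL' hy) hv (ne_of_mem_of_not_mem hy hvL')

end Exploration

section Counting

open Finset

variable {ι : Type*} {L R S D X : Finset ι} {n : ι → ℕ} {p : ι → ι} {w : ι} {k h m r : ℕ}

lemma sum_le_sum_of_discharge {g : ι → ℤ} (hS : S ⊆ L) (hD : D ⊆ L \ S)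
    (hp : ∀ v ∈ S, p v ∈ (L \ S) \ D)
    (hg : ∀ w ∈ (L \ S) \ D, 0 ≤ g w + ∑ v ∈ S with p v = w, g v) :
    ∑ v ∈ D, g v ≤ ∑ v ∈ L, g v := by
  have hfib := sum_fiberwise_of_maps_to hp g
  have hpos := sum_nonneg hg
  rw [sum_add_distrib, hfib] at hpos
  rw [← sum_sdiff hS, ← sum_sdiff hD]
  linarith

lemma le_sum_of_forall_card_eq (hm : ∀ s, k ≤ h * s → m ≤ s) (hX : h ≤ #X)
    (hn : ∀ Y ⊆ X, #Y = h → k ≤ ∑ v ∈ Y, n v) : k + (#X - h) * m ≤ ∑ v ∈ X, n v := by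
  induction hj : #X - h generalizing X with
  | zero => simpa using hn X subset_rfl (by omega)
  | succ j ih =>
    obtain ⟨v, hv, hmv⟩ : ∃ v ∈ X, m ≤ n v := by
      obtain ⟨Y, hYX, hY⟩ := exists_subset_card_eq hX
      obtain ⟨y, hy⟩ : X.Nonempty := card_pos.1 (by omega)
      by_contra! hlt
      obtain ⟨s, rfl⟩ : ∃ s, m = s + 1 := Nat.exists_eq_add_one.2 (hlt y hy).pos
      have hYs := sum_le_card_nsmul Y n s fun v hv => Nat.lt_succ_iff.1 (hlt v (hYX hv))
      rw [hY, smul_eq_mul] at hYs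
      exact Nat.not_succ_le_self s (hm s ((hn Y hYX hY).trans hYs))
    have hcard := card_erase_add_one hv
    have := ih (X := X.erase v) (by omega) (fun Y hY => hn Y (hY.trans (erase_subset v X)))
      (by omega)
    rw [← add_sum_erase X n hv, add_one_mul]
    omega

/-- The surplus of a component with `n` left vertices over `(k + 1 + r * m) / (r + 2)`, scaled by
`r + 2`. For `m = ⌈k / h⌉` and `r = d - h - 1` this is the reciprocal of the fraction in the
expansion hypothesis, and an explored set of components whose average size is larger violates that
hypothesis up to a constant accounting for the starting vertex. -/
def excess (k m r n : ℕ) : ℤ := (r + 2) * n - (k + 1 + r * m)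

lemma sum_excess (k m r : ℕ) (X : Finset ι) (n : ι → ℕ) :
    ∑ v ∈ X, excess k m r (n v) = (r + 2) * ∑ v ∈ X, (n v : ℤ) - (k + 1 + r * m) * #X := by
  simp [excess, sum_sub_distrib, mul_sum, mul_comm]

lemma two_mul_le_of_excess_neg {a : ℕ} (hmk : 2 * m ≤ k + 1) (ha : excess k m r a < 0) :
    2 * a ≤ k := by
  by_contra! hlt
  simp only [excess] at ha
  zify at hlt hmk
  nlinarith

lemma excess_nonneg_or_nonneg {a b : ℕ} (hmk : 2 * m ≤ k + 1) (hab : k < a + b) :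
    0 ≤ excess k m r a ∨ 0 ≤ excess k m r b := by
  by_contra! hneg
  have := two_mul_le_of_excess_neg hmk hneg.1
  have := two_mul_le_of_excess_neg hmk hneg.2
  omega

lemma excess_add_sum_excess_nonneg (hmk : 2 * m ≤ k + 1) (hS : S.Nonempty) (hcard : #S ≤ r + 1)
    (hm : ∀ v ∈ S, m ≤ n v) (hw : ∀ v ∈ S, k < n w + n v) :
    0 ≤ excess k m r (n w) + ∑ v ∈ S, excess k m r (n v) := by
  obtain ⟨v, hv⟩ := hS
  obtain ⟨j, hj⟩ := Nat.exists_eq_add_of_le hcard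
  obtain ⟨b, hb⟩ := Nat.exists_eq_add_of_le hmk
  have hcard_v := card_erase_add_one hv
  have htotal : k + 1 + #(S.erase v) * m ≤ n w + ∑ v ∈ S, n v := by
    have hrest := card_nsmul_le_sum (S.erase v) n m fun y hy => hm y (mem_of_mem_erase hy)
    have hwv := hw v hv
    rw [smul_eq_mul] at hrest
    rw [← add_sum_erase S n hv]
    linarith
  rw [sum_excess, excess]
  zify at *
  calc (0 : ℤ) ≤ b * j := by positivity
    _ = (r + 2) * (k + 1 + #(S.erase v) * m) - (k + 1 + r * m) * (#S + 1) := by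
      rw [show (r : ℤ) = #S + j - 1 by linarith, hb, ← hcard_v]
      ring
    _ ≤ (r + 2) * (n w + ∑ v ∈ S, (n v : ℤ)) - (k + 1 + r * m) * (#S + 1) := by gcongr
    _ = _ := by ring

lemma lt_sum_excess_of_forall_card_eq (hm : ∀ s, k ≤ h * s → m ≤ s) (hm₀ : 1 ≤ m) (hmk : m ≤ k)
    (hcard : #X ≤ h + r + 1) (hn : ∀ Y ⊆ X, #Y = h → k ≤ ∑ v ∈ Y, n v) :
    (k + 1 + r * m : ℤ) < (r + 2) + ∑ v ∈ X, excess k m r (n v) + (k + 1 + r * m) * h := by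
  rw [sum_excess]
  rcases lt_or_ge (#X) h with hlt | hge
  · have hle : (k + 1 + r * m : ℤ) * (#X + 1) ≤ (k + 1 + r * m) * h := by gcongr; exact_mod_cast hlt
    have : 0 ≤ (r + 2) * ∑ v ∈ X, (n v : ℤ) := by positivity
    linarith
  · have hsum := le_sum_of_forall_card_eq hm hge hn
    obtain ⟨j, hj⟩ := Nat.exists_eq_add_of_le hge
    obtain ⟨i, hi⟩ : ∃ i, r + 1 = j + i := Nat.exists_eq_add_of_le (by omega)
    obtain ⟨b, rfl⟩ := Nat.exists_eq_add_of_le hmk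
    rw [hj, Nat.add_sub_cancel_left] at hsum
    rw [hj]
    zify at *
    have hpos : 0 < (b + 1) * i + m * (j + 1 : ℤ) := by positivity
    have hle : (r + 2 : ℤ) * (m + b + j * m) ≤ (r + 2) * ∑ v ∈ X, (n v : ℤ) := by gcongr
    rw [show (r : ℤ) = j + i - 1 by linarith] at hle ⊢
    linarith

/-- Elements of negative excess pass it to their parents under `p`, so that only childless elements
of `R`, the components entered from the starting vertex, are left without compensation. -/
lemma lt_sum_excess (hm : ∀ s, k ≤ h * s → m ≤ s) (hm₀ : 1 ≤ m) (hmk : 2 * m ≤ k + 1)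
    (hRL : R ⊆ L) (hR : #R ≤ h + r + 1) (hRn : ∀ X ⊆ R, #X = h → k ≤ ∑ v ∈ X, n v)
    (hp : ∀ v ∈ L \ R, p v ∈ L) (hpn : ∀ v ∈ L \ R, k < n (p v) + n v)
    (hmn : ∀ v ∈ L \ R, m ≤ n v)
    (hchild : ∀ w ∈ L, #{v ∈ L \ R | p v = w ∧ 2 * n v ≤ k} ≤ r + 1) :
    (k + 1 + r * m : ℤ) < (r + 2) + ∑ v ∈ L, excess k m r (n v) + (k + 1 + r * m) * h := by
  set S := {v ∈ L \ R | excess k m r (n v) < 0}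
  set D := {w ∈ R | ∀ v ∈ S, p v ≠ w}
  have hSLR : S ⊆ L \ R := filter_subset _ _
  have hSneg {v} (hv : v ∈ S) : excess k m r (n v) < 0 := (mem_filter.1 hv).2
  have hDR : D ⊆ R := filter_subset _ _
  have hpS : ∀ v ∈ S, 0 ≤ excess k m r (n (p v)) := fun v hv =>
    (excess_nonneg_or_nonneg hmk (hpn v (hSLR hv))).resolve_right (hSneg hv).not_ge
  have hDL : D ⊆ L \ S := fun w hw => mem_sdiff.2 ⟨hRL (hDR hw), fun hwS =>
    (mem_sdiff.1 (hSLR hwS)).2 (hDR hw)⟩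
  have hsum : ∑ v ∈ D, excess k m r (n v) ≤ ∑ v ∈ L, excess k m r (n v) := by
    refine sum_le_sum_of_discharge (p := p) (hSLR.trans sdiff_subset) hDL (fun v hv => ?_)
      fun w hw => ?_
    · simp only [mem_sdiff]
      exact ⟨⟨hp v (hSLR hv), fun h => (hSneg h).not_ge (hpS v hv)⟩,
        fun h => (mem_filter.1 h).2 v hv rfl⟩
    · obtain ⟨hw, hwD⟩ := mem_sdiff.1 hw
      obtain ⟨hwL, hwS⟩ := mem_sdiff.1 hw
      rcases ({v ∈ S | p v = w} : Finset ι).eq_empty_or_nonempty with hQ | hQ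
      · have hwR : w ∉ R := fun hwR => hwD (mem_filter.2 ⟨hwR, filter_eq_empty_iff.1 hQ⟩)
        rw [hQ, sum_empty, add_zero]
        exact not_lt.1 fun hneg => hwS (mem_filter.2 ⟨mem_sdiff.2 ⟨hwL, hwR⟩, hneg⟩)
      · refine excess_add_sum_excess_nonneg hmk hQ ((card_le_card ?_).trans (hchild w hwL))
          (fun v hv => hmn v (hSLR (mem_filter.1 hv).1)) fun v hv => ?_
        · intro v hv
          obtain ⟨hv, hpv⟩ := mem_filter.1 hv
          exact mem_filter.2 ⟨hSLR hv, hpv, two_mul_le_of_excess_neg hmk (hSneg hv)⟩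
        · obtain ⟨hvS, rfl⟩ := mem_filter.1 hv
          exact hpn v (hSLR hvS)
  have hroots := lt_sum_excess_of_forall_card_eq hm hm₀ (by omega) ((card_le_card hDR).trans hR)
    fun Y hY => hRn Y (hY.trans hDR)
  linarith

end Counting

section Extension

open Finset

variable {E F : Finset (U × V)} {A : Finset U} {L : Finset V} {u₀ : U} {w : V} {h k m r : ℕ}

lemma IsSeparated.card_reachedLeft (hL : IsSeparated F L) (hu₀ : ∀ x, (u₀, x) ∉ F) :
    #(reachedLeft F u₀ L) = ∑ v ∈ L, #(leftComp F v) + 1 := by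
  rw [reachedLeft, card_insert_of_notMem, hL.card_biUnion_leftComp]
  intro hmem
  obtain ⟨y, -, hy⟩ := mem_biUnion.1 hmem
  obtain ⟨x, hx⟩ := exists_mem_of_reachable_inl (mem_leftComp.1 hy)
  exact hu₀ x hx

lemma IsPartialMatching.sum_degL_leftComp (hF : IsPartialMatching E h k A F) (v : V) :
    ∑ u ∈ leftComp F v, degL F u = h * #(leftComp F v) := by
  rw [sum_congr rfl fun u hu => hF.degL_eq u (hF.mem_of_mem_leftComp hu), sum_const, smul_eq_mul,
    mul_comm]

lemma IsPartialMatching.card_reachedRight_add_le (hF : IsPartialMatching E h k A F)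
    (L : Finset V) :
    #(reachedRight F L) + ∑ v ∈ L, #(leftComp F v) ≤ h * ∑ v ∈ L, #(leftComp F v) + #L := by
  have hcomp (v : V) : #(rightComp F v) + #(leftComp F v) ≤ h * #(leftComp F v) + 1 :=
    hF.sum_degL_leftComp v ▸ card_rightComp_add_card_leftComp_le F v
  calc #(reachedRight F L) + ∑ v ∈ L, #(leftComp F v)
      ≤ ∑ v ∈ L, (#(rightComp F v) + #(leftComp F v)) := by
        rw [sum_add_distrib]
        exact Nat.add_le_add_right card_biUnion_le _
    _ ≤ ∑ v ∈ L, (h * #(leftComp F v) + 1) := sum_le_sum fun v _ => hcomp v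
    _ = h * ∑ v ∈ L, #(leftComp F v) + #L := by rw [sum_add_distrib, mul_sum, card_eq_sum_ones]

/-- By `IsBlocked.unique`, all vertices of `Q` are blocked at the same left vertex. -/
lemma IsPartialMatching.card_add_le_of_isBlocked (hF : IsPartialMatching E h k A F) {d : ℕ}
    (hdeg : ∀ u, degL E u ≤ d) (hh : h ≤ d) {Q : Finset V}
    (hQ : ∀ v ∈ Q, ∃ u, (u, v) ∈ E ∧ (u, v) ∉ F ∧ IsBlocked k F w u #(leftComp F v))
    (hsmall : ∀ v ∈ Q, 2 * #(leftComp F v) ≤ k) : #Q + h ≤ d := by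
  obtain rfl | ⟨v, hv⟩ := Q.eq_empty_or_nonempty
  · simpa using hh
  obtain ⟨u, -, -, hb⟩ := hQ v hv
  have hsub : Q ⊆ nbhd E {u} \ nbhd F {u} := fun y hy => by
    obtain ⟨a, haE, haF, hb'⟩ := hQ y hy
    have hs := hsmall v hv
    have hs' := hsmall y hy
    obtain rfl := hb.unique hb' (hF.card_leftComp_le w) (by omega)
    simp [mem_nbhd_singleton, haE, haF]
  have hFE : nbhd F {u} ⊆ nbhd E {u} := fun y hy =>
    mem_nbhd_singleton.2 (hF.subset (mem_nbhd_singleton.1 hy))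
  calc #Q + h ≤ #(nbhd E {u} \ nbhd F {u}) + #(nbhd F {u}) := by
        rw [card_nbhd_singleton F, hF.degL_eq u (hF.mem_of_mem_leftComp hb.mem)]
        exact Nat.add_le_add_right (card_le_card hsub) h
    _ = degL E u := by rw [card_sdiff_add_card_eq_card hFE, card_nbhd_singleton]
    _ ≤ d := hdeg u

lemma IsPartialMatching.le_sum_card_leftComp (hF : IsPartialMatching E h k A F)
    (hu₀ : ∀ x, (u₀, x) ∉ F) (hext : ∀ F', ¬ IsPartialMatching E h k (insert u₀ A) F')
    {X : Finset V} (hXE : X ⊆ nbhd E {u₀}) (hX : IsSeparated F X) (hcard : #X = h) :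
    k ≤ ∑ v ∈ X, #(leftComp F v) := by
  by_contra! hlt
  rw [← deleteLeft_eq_self hu₀] at hX hlt
  exact hext _ (hF.insert_replaceStar hXE hcard hX hlt)

lemma IsExploration.lt_sum_excess (hL : IsExploration E h k A u₀ F L)
    (hF : IsPartialMatching E h k A F) (hu₀ : ∀ x, (u₀, x) ∉ F)
    (hext : ∀ F', ¬ IsPartialMatching E h k (insert u₀ A) F')
    (hm : ∀ s, k ≤ h * s → m ≤ s) (hm₀ : 1 ≤ m) (hmk : 2 * m ≤ k + 1)
    (hdeg : ∀ u, degL E u ≤ h + r + 1) :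
    (k + 1 + r * m : ℤ) <
      (r + 2) + ∑ v ∈ L, excess k m r #(leftComp F v) + (k + 1 + r * m) * h := by
  have hRE : {v ∈ L | (u₀, v) ∈ E} ⊆ nbhd E {u₀} := fun v hv =>
    mem_nbhd_singleton.2 (mem_filter.1 hv).2
  have hR : L \ {v ∈ L | (u₀, v) ∈ E} = {v ∈ L | (u₀, v) ∉ E} := (filter_not _ _).symm
  have hparent (v : V) (hv : v ∈ L \ {v ∈ L | (u₀, v) ∈ E}) :=
    have hv := mem_filter.1 (hR ▸ hv)
    hL.exists_isBlocked hF hv.1 hv.2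
  choose! p hp hblocked using hparent
  refine _root_.lt_sum_excess (p := p) hm hm₀ hmk (filter_subset _ _) ?_ (fun X hX hXh => ?_) hp
    (fun v hv => ?_) (fun v hv => ?_) fun w _ => ?_
  · exact (card_le_card hRE).trans ((card_nbhd_singleton E u₀).trans_le (hdeg u₀))
  · exact hF.le_sum_card_leftComp hu₀ hext (hX.trans hRE)
      (hL.isSeparated.mono (hX.trans (filter_subset _ _))) hXh
  · obtain ⟨u, -, -, hb⟩ := hblocked v hv
    have := card_le_card (cutOff_subset F (p v) u)
    have := hb.lt
    omega
  · obtain ⟨u, -, -, hb⟩ := hblocked v hv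
    exact hm _ (hF.degL_eq u (hF.mem_of_mem_leftComp hb.mem) ▸ hb.le_mul)
  · have := hF.card_add_le_of_isBlocked (w := w)
      (Q := {v ∈ L \ {v ∈ L | (u₀, v) ∈ E} | p v = w ∧ 2 * #(leftComp F v) ≤ k}) hdeg (by omega)
      (fun v hv => by
        obtain ⟨hvL, rfl, -⟩ := mem_filter.1 hv
        exact hblocked v hvL)
      fun v hv => (mem_filter.1 hv).2.2
    omega

lemma IsPartialMatching.exists_insert (hF : IsPartialMatching E h k A F) (hu₀ : u₀ ∉ A)
    (hm : ∀ s, k ≤ h * s → m ≤ s) (hm₀ : 1 ≤ m) (hmk : 2 * m ≤ k + 1)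
    (hdeg : ∀ u, degL E u ≤ h + r + 1)
    (hexp : ∀ S, ((h - 1) * (k + 1 + r * m) + (r + 2) : ℤ) * #S ≤ (k + 1 + r * m) * #(nbhd E S)) :
    ∃ F', IsPartialMatching E h k (insert u₀ A) F' := by
  by_contra! hext
  obtain ⟨F', L, hF', hL, hsub⟩ := IsExploration.empty.exists_nbhd_subset hF (u₀ := u₀)
  have hu₀' (x) : (u₀, x) ∉ F' := fun hx => hu₀ (hF'.fst_mem _ hx)
  have hlt := hL.lt_sum_excess hF' hu₀' hext hm hm₀ hmk hdeg
  have hright := hF'.card_reachedRight_add_le L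
  have hleft := hexp (reachedLeft F' u₀ L)
  have hnbhd := card_le_card hsub
  rw [hL.isSeparated.card_reachedLeft hu₀'] at hleft
  rw [sum_excess] at hlt
  zify at *
  have hΓ : (k + 1 + r * m : ℤ) * #(nbhd E (reachedLeft F' u₀ L)) ≤
      (k + 1 + r * m) * ((h - 1) * ∑ v ∈ L, (#(leftComp F' v) : ℤ) + #L) := by
    gcongr
    linarith
  linarith

lemma isPartialMatching_empty (E : Finset (U × V)) (h k : ℕ) :
    IsPartialMatching E h k ∅ ∅ where
  subset := empty_subset E
  isAcyclic := by
    have hbot : mkGraph (∅ : Finset (U × V)) = ⊥ := by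
      ext x y
      simp [mkGraph_adj]
    exact hbot ▸ SimpleGraph.isAcyclic_bot
  fst_mem := by simp
  degL_eq := by simp
  card_leftComp_le v := by simp [leftComp]

lemma exists_isPartialMatching (hm : ∀ s, k ≤ h * s → m ≤ s) (hm₀ : 1 ≤ m)
    (hmk : 2 * m ≤ k + 1) (hdeg : ∀ u, degL E u ≤ h + r + 1)
    (hexp : ∀ S, ((h - 1) * (k + 1 + r * m) + (r + 2) : ℤ) * #S ≤ (k + 1 + r * m) * #(nbhd E S))
    (A : Finset U) : ∃ F, IsPartialMatching E h k A F := by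
  induction A using Finset.induction_on with
  | empty => exact ⟨∅, isPartialMatching_empty E h k⟩
  | insert u A hu ih =>
    obtain ⟨F, hF⟩ := ih
    exact hF.exists_insert hu hm hm₀ hmk hdeg hexp

lemma IsPartialMatching.isSTMatching (hF : IsPartialMatching E h k A F) (hA : ∀ u, u ∈ A) :
    IsSTMatching h (h * k) E F := by
  refine ⟨hF.subset, hF.isAcyclic, fun c => ?_, fun u => hF.degL_eq u (hA u)⟩
  obtain hc | ⟨⟨u, v⟩, huv⟩ := (componentEdges F c).eq_empty_or_nonempty
  · simp [hc]
  obtain ⟨hp, rfl⟩ := mem_filter.1 huv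
  have hsub : componentEdges F ((mkGraph F).connectedComponentMk (.inl u)) ⊆
      {q ∈ F | q.1 ∈ leftComp F v} := fun q hq => by
    obtain ⟨hqF, hq⟩ := mem_filter.1 hq
    have hqu := SimpleGraph.ConnectedComponent.exact hq
    exact mem_filter.2 ⟨hqF, mem_leftComp.2 (hqu.trans (reachable_of_mem hp)).symm⟩
  calc _ ≤ ∑ a ∈ leftComp F v, degL F a := card_filter_fst_mem F _ ▸ card_le_card hsub
    _ = h * #(leftComp F v) := hF.sum_degL_leftComp v
    _ ≤ h * k := Nat.mul_le_mul_left h (hF.card_leftComp_le v)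

end Extension

section Ceil

variable {K : Type*} [Field K] [LinearOrder K] [IsStrictOrderedRing K]

lemma add_div_mul_le_iff {a b c s g : K} (hc : 0 < c) :
    (a + b / c) * s ≤ g ↔ (a * c + b) * s ≤ c * g := by
  rw [← mul_le_mul_iff_right₀ hc, ← mul_assoc, mul_add, mul_div_cancel₀ b hc.ne', mul_comm c a]

lemma ceil_div_le_iff [FloorSemiring K] {k h s : ℕ} (hh : 0 < h) :
    ⌈(k / h : K)⌉₊ ≤ s ↔ k ≤ h * s := by
  rw [Nat.ceil_le, div_le_iff₀' (Nat.cast_pos.2 hh)]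
  exact_mod_cast Iff.rfl

lemma two_mul_ceil_div_le [FloorSemiring K] {k h : ℕ} (hh : 2 ≤ h) :
    2 * ⌈(k / h : K)⌉₊ ≤ k + 1 := by
  have hle : ⌈(k / h : K)⌉₊ ≤ (k + 1) / 2 := by
    rw [ceil_div_le_iff (by omega)]
    calc k ≤ 2 * ((k + 1) / 2) := by omega
      _ ≤ h * ((k + 1) / 2) := Nat.mul_le_mul_right _ hh
  omega

end Ceil

theorem stmt_1_general {U V : Type*} (k h d : ℕ) (hk : 1 ≤ k)
    (hh : 2 ≤ h) (hd : h < d) (E : Finset (U × V))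
    (hdeg : ∀ u : U, degL E u ≤ d)
    (hN : ∀ S : Finset U,
      ((h : ℝ) - 1 +
          ((d : ℝ) - h + 1) /
            ((k : ℝ) + 1 + ((d : ℝ) - h - 1) * (Nat.ceil ((k : ℝ) / (h : ℝ)) : ℝ))) *
          S.card ≤ ((nbhd E S).card : ℝ)) :
    ∃ F : Finset (U × V), IsSTMatching h (h * k) E F := by
  obtain ⟨r, rfl⟩ : ∃ r, d = h + r + 1 := Nat.exists_eq_add_of_lt hd
  set m := Nat.ceil ((k : ℝ) / h)
  have hm (s) (hs : k ≤ h * s) : m ≤ s := (ceil_div_le_iff (by omega)).2 hs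
  have hm₀ : 1 ≤ m := Nat.ceil_pos.2 (by positivity)
  have hexp (S : Finset U) :
      ((h - 1) * (k + 1 + r * m) + (r + 2) : ℤ) * S.card ≤ (k + 1 + r * m) * (nbhd E S).card := by
    have hS := hN S
    rw [show ((h + r + 1 : ℕ) : ℝ) = h + r + 1 by push_cast; rfl,
      show (h + r + 1 - h - 1 : ℝ) = r by ring, show (h + r + 1 - h + 1 : ℝ) = r + 2 by ring,
      add_div_mul_le_iff (by positivity)] at hS
    exact_mod_cast hS
  have hE (u : U) : u ∈ E.image Prod.fst := by
    suffices hu : (nbhd E {u}).Nonempty from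
      let ⟨x, hx⟩ := hu
      Finset.mem_image_of_mem Prod.fst (mem_nbhd_singleton.1 hx)
    by_contra! hempty
    have hu := hexp {u}
    rw [hempty, Finset.card_empty, Finset.card_singleton] at hu
    have : (0 : ℤ) ≤ (h - 1) * (k + 1 + r * m) := mul_nonneg (by omega) (by positivity)
    omega
  obtain ⟨F, hF⟩ := exists_isPartialMatching hm hm₀ (two_mul_ceil_div_le hh) hdeg hexp _
  exact ⟨F, hF.isSTMatching hE⟩

/-- **Theorem 3 (main).** Let `k ≥ 1` and `d > h ≥ 2` and let `G = (U,V,E)` be a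
bipartite graph with `d(u) ≤ d` for all `u ∈ U` and
`|Γ(S)| ≥ (h − 1 + (d − h + 1)/(k + 1 + (d − h − 1)·⌈k/h⌉))·|S|` for every `S ⊆ U`.
Then `G` has an `(h, hk)`-matching. -/
theorem stmt_1 {U V : Type*} [Fintype U] [Fintype V] (k h d : ℕ) (hk : 1 ≤ k)
    (hh : 2 ≤ h) (hd : h < d) (E : Finset (U × V))
    (hdeg : ∀ u : U, degL E u ≤ d)
    (hN : ∀ S : Finset U,
      ((h : ℝ) - 1 +
          ((d : ℝ) - h + 1) /
            ((k : ℝ) + 1 + ((d : ℝ) - h - 1) * (Nat.ceil ((k : ℝ) / (h : ℝ)) : ℝ))) *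
          S.card ≤ ((nbhd E S).card : ℝ)) :
    ∃ F : Finset (U × V), IsSTMatching h (h * k) E F :=
  stmt_1_general k h d hk hh hd E hdeg hN
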